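/- Let X be a finite-dimensional real inner product space, let C ⊆ X be a nonempty closed convex set, and let F : X → X be continuous and α-strongly monotone for some α > 0. Then there exists a unique point x∘ ∈ C solving the variational inequality VI(F, C), i.e., a unique x∘ ∈ C with ⟨F(x∘), x − x∘⟩ ≥ 0 for all x ∈ C. -/

import Mathlib

open RealInnerProductSpace

/-!
Strong monotonicity turns the variational inequality into the strong Minty inequalities
`α * ‖y - x‖ ^ 2 ≤ ⟪F y, y - x⟫`, `y ∈ C`. For each test point `y` they cut out a bounded closed
convex set of `x`, so by weak compactness it is enough to solve finitely many of them at a time.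
By the minimax theorem it is then enough to solve one convex combination of them, with weights
`w i` at test points `y i`, and there `x = ∑ i, w i • y i` works: strong monotonicity bounds the
`i`-th defect by `-⟪F x, y i - x⟫`, and these bounds average to zero. Finally, Minty's argument of
approaching `x` along segments recovers the variational inequality.
-/

open Bornology Filter NormedSpace Set Topology

section WeakCompactness

theorem isClosed_toWeakSpace_symm_preimage {E : Type*} [AddCommGroup E] [Module ℝ E]
    [TopologicalSpace E] [IsTopologicalAddGroup E] [ContinuousSMul ℝ E] [LocallyConvexSpace ℝ E]
    {s : Set E} (hs : IsClosed s) (hconv : Convex ℝ s) :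
    IsClosed ((toWeakSpace ℝ E).symm ⁻¹' s) := by
  rw [← LinearEquiv.image_eq_preimage_symm, ← closure_eq_iff_isClosed,
    ← hconv.toWeakSpace_closure ℝ, hs.closure_eq]

variable {E : Type*} [NormedAddCommGroup E] [NormedSpace ℝ E]

theorem isCompact_toWeakSpace_symm_preimage
    (hE : Function.Surjective (inclusionInDoubleDual ℝ E)) {s : Set E} (hs : IsClosed s)
    (hconv : Convex ℝ s) (hbdd : IsBounded s) : IsCompact ((toWeakSpace ℝ E).symm ⁻¹' s) := by
  have hsurj : Function.Surjective (inclusionInDoubleDualWeak ℝ E) := fun φ => hE φ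
  rw [← (isClosed_toWeakSpace_symm_preimage hs hconv).closure_eq]
  refine isCompact_closure_of_isBounded ℝ E _ hbdd ?_
  rw [hsurj.range_eq]
  exact subset_univ _

theorem inter_iInter_nonempty_of_isBounded_of_convex
    (hE : Function.Surjective (inclusionInDoubleDual ℝ E)) {ι : Type*} {K : Set E}
    (hK : IsClosed K) (hKconv : Convex ℝ K) (hKbdd : IsBounded K) {S : ι → Set E}
    (hS : ∀ i, IsClosed (S i)) (hSconv : ∀ i, Convex ℝ (S i))
    (hfin : ∀ u : Finset ι, (K ∩ ⋂ i ∈ u, S i).Nonempty) : (K ∩ ⋂ i, S i).Nonempty := by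
  have hsurj := (toWeakSpace ℝ E).symm.surjective
  have hweak : ((toWeakSpace ℝ E).symm ⁻¹' K ∩ ⋂ i, (toWeakSpace ℝ E).symm ⁻¹' S i).Nonempty := by
    refine (isCompact_toWeakSpace_symm_preimage hE hK hKconv hKbdd).inter_iInter_nonempty _
      (fun i => isClosed_toWeakSpace_symm_preimage (hS i) (hSconv i)) fun u => ?_
    simpa only [preimage_inter, preimage_iInter] using (hfin u).preimage hsurj
  rw [← preimage_iInter, ← preimage_inter] at hweak
  exact nonempty_of_nonempty_preimage hweak

theorem inclusionInDoubleDual_surjective {H : Type*} [NormedAddCommGroup H]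
    [InnerProductSpace ℝ H] [CompleteSpace H] :
    Function.Surjective (inclusionInDoubleDual ℝ H) := by
  intro φ
  refine ⟨(InnerProductSpace.toDual ℝ H).symm (φ.comp (innerSL ℝ)), ?_⟩
  ext f
  obtain ⟨y, rfl⟩ := (InnerProductSpace.toDual ℝ H).surjective f
  rw [dual_def, InnerProductSpace.toDual_apply_apply, real_inner_comm,
    InnerProductSpace.toDual_symm_apply]
  rfl

end WeakCompactness

section Minimax

theorem convexOn_sum_mul {E ι : Type*} [AddCommGroup E] [Module ℝ E] [Fintype ι] {K : Set E}
    (hK : Convex ℝ K) {h : ι → E → ℝ} (hconv : ∀ i, ConvexOn ℝ K (h i)) {w : ι → ℝ}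
    (hw : ∀ i, 0 ≤ w i) : ConvexOn ℝ K fun x => ∑ i, w i * h i x := by
  rw [← Finset.sum_fn]
  exact Finset.sum_induction _ (ConvexOn ℝ K) (fun _ _ => ConvexOn.add) (convexOn_const 0 hK)
    fun i _ => (hconv i).smul (hw i)

theorem exists_forall_nonpos_of_forall_stdSimplex {E ι : Type*} [AddCommGroup E] [Module ℝ E]
    [TopologicalSpace E] [IsTopologicalAddGroup E] [ContinuousSMul ℝ E] [Fintype ι] {K : Set E}
    (hne : K.Nonempty) (hK : IsCompact K) (hKconv : Convex ℝ K) {h : ι → E → ℝ}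
    (hconv : ∀ i, ConvexOn ℝ K (h i)) (hlsc : ∀ i, LowerSemicontinuousOn (h i) K)
    (hsum : ∀ w ∈ stdSimplex ℝ ι, ∃ x ∈ K, ∑ i, w i * h i x ≤ 0) :
    ∃ x ∈ K, ∀ i, h i x ≤ 0 := by
  classical
  by_contra! hpos
  let vertices : Set (ι → ℝ) := range fun i => Pi.single i 1
  have hvertex : ∀ x ∈ K, ∃ w ∈ vertices, 0 < ∑ i, w i * h i x := by
    intro x hx
    obtain ⟨i, hi⟩ := hpos x hx
    exact ⟨Pi.single i 1, mem_range_self i, by simpa [Pi.single_apply] using hi⟩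
  have hlin (x : E) : ConcaveOn ℝ (stdSimplex ℝ ι) fun w => ∑ i, w i * h i x :=
    (Fintype.linearCombination ℝ (h · x)).concaveOn (convex_stdSimplex ℝ ι)
  obtain ⟨w, hw, hwpos⟩ := Sion.exists_lt_iInf_of_lt_iInf_of_finite hne hK
    (fun w hw => lowerSemicontinuousOn_sum fun i _ =>
      (continuous_const_mul (w i)).comp_lowerSemicontinuousOn (hlsc i)
        (monotone_mul_left_of_nonneg (hw.1 i)))
    (fun w hw => (convexOn_sum_mul hKconv hconv hw.1).quasiconvexOn)
    (convex_stdSimplex ℝ ι)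
    (fun x _ => (Continuous.upperSemicontinuous (by fun_prop)).upperSemicontinuousOn _)
    (fun x _ => (hlin x).quasiconcaveOn)
    hKconv (finite_range _) (range_subset_iff.2 (single_mem_stdSimplex ℝ)) hvertex
  obtain ⟨x, hx, hle⟩ := hsum w hw
  exact (hwpos x hx).not_ge hle

end Minimax

section VariationalInequality

variable {X : Type*} [NormedAddCommGroup X] [InnerProductSpace ℝ X] {F : X → X} {α : ℝ}
  {C : Set X} {x y : X}

/-- `F` is `α`-strongly monotone on the set `C`. The sign of `α` is left free, `α = 0` being plain
monotonicity. -/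
def StronglyMonotoneOn (F : X → X) (α : ℝ) (C : Set X) : Prop :=
  ∀ x ∈ C, ∀ y ∈ C, α * ‖x - y‖ ^ 2 ≤ ⟪F x - F y, x - y⟫

/-- `x` is a solution of the variational inequality `VI(F, C)`. -/
def IsVISolution (F : X → X) (C : Set X) (x : X) : Prop :=
  x ∈ C ∧ ∀ y ∈ C, 0 ≤ ⟪F x, y - x⟫

/-- The amount by which `x` violates the strong Minty inequality `α * ‖y - x‖ ^ 2 ≤ ⟪F y, y - x⟫`
at the test point `y`; the inequality holds iff the defect is nonpositive. -/
def mintyDefect (F : X → X) (α : ℝ) (y x : X) : ℝ :=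
  α * ‖y - x‖ ^ 2 - ⟪F y, y - x⟫

theorem continuous_mintyDefect : Continuous (mintyDefect F α y) := by
  unfold mintyDefect
  fun_prop

theorem convexOn_mintyDefect (hα : 0 ≤ α) (hC : Convex ℝ C) :
    ConvexOn ℝ C (mintyDefect F α y) := by
  have hquad : ConvexOn ℝ C fun x => α * dist x y ^ 2 :=
    ((convexOn_dist y hC).pow (fun _ _ => dist_nonneg) 2).smul hα
  have hlin : ConvexOn ℝ C fun x => ⟪F y, x⟫ + -⟪F y, y⟫ :=
    ((innerₗ X (F y)).convexOn hC).add_const _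
  refine (hquad.add hlin).congr fun x _ => ?_
  simp only [mintyDefect, Pi.add_apply, dist_eq_norm', inner_sub_right]
  ring

theorem isBounded_mintyDefect_nonpos (hα : 0 < α) :
    IsBounded {x | mintyDefect F α y x ≤ 0} := by
  refine (Metric.isBounded_closedBall (x := y) (r := ‖F y‖ / α)).subset fun x hx => ?_
  rw [mem_ofPred_eq, mintyDefect, sub_nonpos] at hx
  rw [Metric.mem_closedBall, dist_eq_norm', le_div_iff₀' hα]
  rcases (norm_nonneg (y - x)).eq_or_lt with hzero | hpos
  · simp [← hzero]
  · refine le_of_mul_le_mul_right ?_ hpos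
    calc α * ‖y - x‖ * ‖y - x‖ = α * ‖y - x‖ ^ 2 := by ring
      _ ≤ ⟪F y, y - x⟫ := hx
      _ ≤ ‖F y‖ * ‖y - x‖ := real_inner_le_norm _ _

namespace StronglyMonotoneOn

theorem mintyDefect_le (hF : StronglyMonotoneOn F α C) (hy : y ∈ C) (hx : x ∈ C) :
    mintyDefect F α y x ≤ -⟪F x, y - x⟫ := by
  have h := hF y hy x hx
  rw [inner_sub_left] at h
  rw [mintyDefect]
  linarith

theorem sum_mul_mintyDefect_nonpos {ι : Type*} [Fintype ι] {y : ι → X}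
    (hF : StronglyMonotoneOn F α C) (hy : ∀ i, y i ∈ C) {w : ι → ℝ} (hw : w ∈ stdSimplex ℝ ι)
    (hx : ∑ i, w i • y i ∈ C) : ∑ i, w i * mintyDefect F α (y i) (∑ j, w j • y j) ≤ 0 := by
  set x := ∑ i, w i • y i with hx_def
  have hcentre : ∑ i, w i • (y i - x) = 0 := by
    simp only [smul_sub, Finset.sum_sub_distrib, ← Finset.sum_smul, hw.2, one_smul, ← hx_def,
      sub_self]
  calc ∑ i, w i * mintyDefect F α (y i) x
      ≤ ∑ i, w i * -⟪F x, y i - x⟫ :=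
        Finset.sum_le_sum fun i _ =>
          mul_le_mul_of_nonneg_left (hF.mintyDefect_le (hy i) hx) (hw.1 i)
    _ = -⟪F x, ∑ i, w i • (y i - x)⟫ := by
        simp only [inner_sum, real_inner_smul_right, mul_neg, Finset.sum_neg_distrib]
    _ = 0 := by rw [hcentre, inner_zero_right, neg_zero]

theorem exists_mem_convexHull_forall_mintyDefect_nonpos {ι : Type*} [Finite ι] [Nonempty ι]
    {y : ι → X} (hα : 0 ≤ α) (hF : StronglyMonotoneOn F α (convexHull ℝ (range y))) :
    ∃ x ∈ convexHull ℝ (range y), ∀ i, mintyDefect F α (y i) x ≤ 0 := by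
  have := Fintype.ofFinite ι
  have hconv := convex_convexHull ℝ (range y)
  have hy (i : ι) : y i ∈ convexHull ℝ (range y) := subset_convexHull ℝ _ (mem_range_self i)
  refine exists_forall_nonpos_of_forall_stdSimplex (range_nonempty y).convexHull
    ((finite_range y).isCompact_convexHull ℝ) hconv (fun i => convexOn_mintyDefect hα hconv)
    (fun i => continuous_mintyDefect.lowerSemicontinuous.lowerSemicontinuousOn _) fun w hw => ?_
  have hx : ∑ i, w i • y i ∈ convexHull ℝ (range y) :=
    hconv.sum_mem (fun i _ => hw.1 i) hw.2 fun i _ => hy i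
  exact ⟨_, hx, hF.sum_mul_mintyDefect_nonpos hy hw hx⟩

theorem exists_forall_mintyDefect_nonpos [CompleteSpace X] (hF : StronglyMonotoneOn F α C)
    (hα : 0 < α) (hne : C.Nonempty) (hC : IsClosed C) (hconv : Convex ℝ C) :
    ∃ x ∈ C, ∀ y ∈ C, mintyDefect F α y x ≤ 0 := by
  classical
  obtain ⟨p, hp⟩ := hne
  let S (y : X) : Set X := {x | mintyDefect F α y x ≤ 0}
  have hS (y : X) : IsClosed (S y) := isClosed_le continuous_mintyDefect continuous_const
  have hSconv (y : X) : Convex ℝ (S y) := by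
    simpa [S] using (convexOn_mintyDefect hα.le convex_univ).convex_le 0
  have hfin (u : Finset C) : ((C ∩ S p) ∩ ⋂ y ∈ u, S y).Nonempty := by
    let v : Finset C := insert ⟨p, hp⟩ u
    have : Nonempty v := ⟨⟨p, hp⟩, Finset.mem_insert_self _ _⟩
    have hsub : convexHull ℝ (range fun y : v => (y : X)) ⊆ C :=
      convexHull_min (range_subset_iff.2 fun y => y.1.2) hconv
    obtain ⟨x, hx, hxS⟩ := exists_mem_convexHull_forall_mintyDefect_nonpos hα.le
      fun a ha b hb => hF a (hsub ha) b (hsub hb)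
    exact ⟨x, ⟨hsub hx, hxS ⟨_, Finset.mem_insert_self _ _⟩⟩,
      mem_iInter₂.2 fun y hy => hxS ⟨y, Finset.mem_insert_of_mem hy⟩⟩
  obtain ⟨x, ⟨hxC, -⟩, hx⟩ := inter_iInter_nonempty_of_isBounded_of_convex
    inclusionInDoubleDual_surjective (hC.inter (hS p)) (hconv.inter (hSconv p))
    ((isBounded_mintyDefect_nonpos hα).subset inter_subset_right)
    (fun y : C => hS y) (fun y => hSconv y) hfin
  exact ⟨x, hxC, fun y hy => mem_iInter.1 hx ⟨y, hy⟩⟩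

theorem isVISolution_unique (hF : StronglyMonotoneOn F α C) (hα : 0 < α)
    (hx : IsVISolution F C x) (hy : IsVISolution F C y) : x = y := by
  have hinner : ⟪F x - F y, x - y⟫ = -⟪F x, y - x⟫ - ⟪F y, x - y⟫ := by
    rw [inner_sub_left, ← neg_sub y x, inner_neg_right]
  have hle : α * ‖x - y‖ ^ 2 ≤ 0 := by
    linarith [hF x hx.1 y hy.1, hx.2 y hy.1, hy.2 x hx.1]
  rw [← sub_eq_zero, ← norm_eq_zero, ← sq_eq_zero_iff]
  exact le_antisymm (nonpos_of_mul_nonpos_right hle hα) (sq_nonneg _)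

end StronglyMonotoneOn

theorem isVISolution_of_forall_inner_nonneg (hconv : Convex ℝ C) (hx : x ∈ C)
    (hcont : ContinuousWithinAt F C x) (hminty : ∀ y ∈ C, 0 ≤ ⟪F y, y - x⟫) :
    IsVISolution F C x := by
  refine ⟨hx, fun y hy => ?_⟩
  let z (t : ℝ) : X := x + t • (y - x)
  have hzC {t : ℝ} (ht : t ∈ Ioo 0 1) : z t ∈ C :=
    hconv.add_smul_sub_mem hx hy (Ioo_subset_Icc_self ht)
  have hIoo : ∀ᶠ t : ℝ in 𝓝[>] 0, t ∈ Ioo 0 1 := Ioo_mem_nhdsGT one_pos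
  have hz : Tendsto z (𝓝[>] 0) (𝓝[C] x) := by
    refine tendsto_nhdsWithin_iff.2 ⟨?_, hIoo.mono fun t => hzC⟩
    have hzcont : Continuous z := by fun_prop
    exact (hzcont.tendsto' 0 x (by simp [z])).mono_left nhdsWithin_le_nhds
  refine ge_of_tendsto ((hcont.tendsto.comp hz).inner tendsto_const_nhds) ?_
  filter_upwards [hIoo] with t ht
  have hnonneg := hminty (z t) (hzC ht)
  rw [add_sub_cancel_left, real_inner_smul_right] at hnonneg
  exact nonneg_of_mul_nonneg_right hnonneg ht.1

theorem stmt_0_general [CompleteSpace X] (hne : C.Nonempty) (hC : IsClosed C)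
    (hconv : Convex ℝ C) (hcont : ContinuousOn F C) (hα : 0 < α)
    (hF : StronglyMonotoneOn F α C) : ∃! x, IsVISolution F C x := by
  obtain ⟨x, hx, hdefect⟩ := hF.exists_forall_mintyDefect_nonpos hα hne hC hconv
  have hminty : ∀ y ∈ C, 0 ≤ ⟪F y, y - x⟫ := fun y hy =>
    (mul_nonneg hα.le (sq_nonneg _)).trans (sub_nonpos.1 (hdefect y hy))
  have hsol := isVISolution_of_forall_inner_nonneg hconv hx (hcont x hx) hminty
  exact ⟨x, hsol, fun _ hy => hF.isVISolution_unique hα hy hsol⟩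

end VariationalInequality

/-- In a finite-dimensional real inner product space, for a nonempty closed convex set
`C` and a continuous, `α`-strongly monotone map `F` (with `α > 0`), the variational
inequality `VI(F, C)` has a unique solution `x₀`, i.e. a unique `x₀ ∈ C` with
`⟪F x₀, x - x₀⟫ ≥ 0` for all `x ∈ C`. -/
theorem stmt_0 {X : Type*} [NormedAddCommGroup X] [InnerProductSpace ℝ X]
    [FiniteDimensional ℝ X]
    (C : Set X) (hCne : C.Nonempty) (hCcl : IsClosed C) (hCcv : Convex ℝ C)
    (F : X → X) (hFcont : Continuous F) (α : ℝ) (hα : 0 < α)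
    (hmono : ∀ x y : X, α * ‖x - y‖ ^ 2 ≤ ⟪F x - F y, x - y⟫) :
    ∃! x₀ : X, x₀ ∈ C ∧ ∀ x ∈ C, 0 ≤ ⟪F x₀, x - x₀⟫ :=
  have : CompleteSpace X := FiniteDimensional.complete ℝ X
  stmt_0_general hCne hCcl hCcv hFcont.continuousOn hα fun x _ y _ => hmono x y
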